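/- Let X be an n×p real matrix with orthonormal columns (XᵀX = I_p), let y ∈ ℝ^n, σ > 0, and set z_j := ⟨y, X_j⟩. Assume the values |z_1|,…,|z_p| are pairwise distinct. For 1 ≤ k ≤ p, let λ̂_k be the k-th largest value among |z_1|,…,|z_p| and let Â_k ⊆ {1,…,p} be the set of indices of the k largest values of |z_j| (with Â_0 := ∅). Then for every 1 ≤ k ≤ p, the covariance test statistic vanishes at the knot: T(Â_{k−1}, λ̂_k) = 0. -/

import Mathlib

open scoped BigOperators

noncomputable section

/-- Euclidean inner product on `Fin n → ℝ`. -/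
def ip {n : ℕ} (a b : Fin n → ℝ) : ℝ := ∑ i, a i * b i

/-- Squared Euclidean norm on `Fin n → ℝ`. -/
def sqnorm {n : ℕ} (a : Fin n → ℝ) : ℝ := ∑ i, (a i) ^ 2

/-!
For an orthonormal design the lasso objective is, up to a constant, a sum of strictly convex
functions of the single coefficients, the `j`-th depending only on `z j = ⟨y, X_j⟩` and on the
penalty. So the coefficient of `X_j` in a lasso fit does not depend on which other columns take
part, and it is `0` as soon as `|z j|` is at most the penalty. At the `k`-th knot this happens for
every `j` outside the top `k - 1`, hence the two fits being compared coincide.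
-/

section SeparableMinimization

variable {ι M : Type*} [Fintype ι] [AddCommMonoid M] [LinearOrder M] [IsOrderedCancelAddMonoid M]

theorem isMinOn_apply_of_isMinOn_sum {E : ι → Type*} {f : ∀ i, E i → M} {x : ∀ i, E i}
    (hx : IsMinOn (fun x : ∀ i, E i => ∑ i, f i (x i)) Set.univ x) (i : ι) :
    IsMinOn (f i) Set.univ (x i) := by
  classical
  rw [isMinOn_univ_iff] at hx ⊢
  intro t
  by_contra! h_lt
  refine (hx (Function.update x i t)).not_gt (Finset.sum_lt_sum (fun j _ => ?_) ⟨i, ?_⟩)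
  · rcases eq_or_ne j i with rfl | hji
    · simpa using h_lt.le
    · simp [hji]
  · simpa using h_lt

end SeparableMinimization

section TopSets

variable {ι α : Type*} [LinearOrder α]

theorem le_inf'_of_notMem_of_card_le_succ {f : ι → α} {A B : Finset ι}
    (hcard : B.card ≤ A.card + 1)
    (hA : ∀ i ∈ A, ∀ j ∉ A, f j ≤ f i) (hB : ∀ i ∈ B, ∀ j ∉ B, f j ≤ f i)
    (hBne : B.Nonempty) {j : ι} (hj : j ∉ A) : f j ≤ B.inf' hBne f := by
  classical
  refine Finset.le_inf' hBne f fun i hiB => ?_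
  by_cases hiA : i ∈ A
  · exact hA i hiA j hj
  by_cases hjB : j ∉ B
  · exact hB i hiB j hjB
  rw [not_not] at hjB
  by_cases hAB : A ⊆ B
  · have hdiff : (B \ A).card ≤ 1 := by
      rw [Finset.card_sdiff_of_subset hAB]
      omega
    have hji : j = i := Finset.card_le_one.1 hdiff j (Finset.mem_sdiff.2 ⟨hjB, hj⟩)
      i (Finset.mem_sdiff.2 ⟨hiB, hiA⟩)
    rw [hji]
  · obtain ⟨a, haA, haB⟩ := Finset.not_subset.1 hAB
    exact (hA a haA j hj).trans (hB i hiB a haB)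

end TopSets

section ScalarLasso

/-- The lasso objective in one variable: the contribution of a coefficient `b` to the lasso
objective of an orthonormal design, when the inner product of its column with the response is `z`.
The part `z ^ 2 / 2`, which does not depend on `b`, is left out. -/
def scalarLasso (lam z b : ℝ) : ℝ := (1 / 2) * b ^ 2 - b * z + lam * |b|

variable {lam z : ℝ}

theorem strongConvexOn_scalarLasso (hlam : 0 ≤ lam) :
    StrongConvexOn Set.univ 1 (scalarLasso lam z) := by
  have h_abs : ConvexOn ℝ Set.univ fun b : ℝ => lam * |b| :=
    (convexOn_norm convex_univ).smul hlam
  have h_linear : ConcaveOn ℝ Set.univ fun b : ℝ => b * z :=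
    (LinearMap.mulRight ℝ z).concaveOn convex_univ
  refine strongConvexOn_iff_convex.2 ((h_abs.sub h_linear).congr fun b _ => ?_)
  simp only [Pi.sub_apply, scalarLasso, Real.norm_eq_abs, sq_abs]
  ring

theorem eq_of_isMinOn_scalarLasso (hlam : 0 ≤ lam) {b c : ℝ}
    (hb : IsMinOn (scalarLasso lam z) Set.univ b) (hc : IsMinOn (scalarLasso lam z) Set.univ c) :
    b = c :=
  ((strongConvexOn_scalarLasso hlam).strictConvexOn one_pos).eq_of_isMinOn hb hc
    (Set.mem_univ b) (Set.mem_univ c)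

theorem isMinOn_scalarLasso_zero (hz : |z| ≤ lam) : IsMinOn (scalarLasso lam z) Set.univ 0 := by
  refine isMinOn_univ_iff.2 fun b => ?_
  have h_penalty : b * z ≤ lam * |b| :=
    calc b * z ≤ |b * z| := le_abs_self _
      _ = |z| * |b| := by rw [abs_mul, mul_comm]
      _ ≤ lam * |b| := by gcongr
  simp only [scalarLasso, abs_zero]
  nlinarith [sq_nonneg b]

end ScalarLasso

section ColumnSubmatrix

variable {m ι R : Type*}

/-- The submatrix `X_S` of the columns of `X` with index in `S`. -/
abbrev columnSubmatrix (X : Matrix m ι R) (S : Finset ι) : Matrix m S R :=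
  X.submatrix id (↑)

theorem columnSubmatrix_transpose_mul_self [Fintype m] [DecidableEq ι] [NonAssocSemiring R]
    {X : Matrix m ι R} (hX : X.transpose * X = 1) (S : Finset ι) :
    (columnSubmatrix X S).transpose * columnSubmatrix X S = 1 := by
  rw [Matrix.transpose_submatrix, ← Matrix.submatrix_mul _ _ _ _ _ Function.bijective_id, hX,
    Matrix.submatrix_one _ Subtype.val_injective]

end ColumnSubmatrix

section Lasso

variable {n : ℕ} {ι : Type*} [Fintype ι]

/-- The lasso objective `(1/2)‖y - Xβ‖² + lam ‖β‖₁`. -/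
def lassoObjective (X : Matrix (Fin n) ι ℝ) (y : Fin n → ℝ) (lam : ℝ) (β : ι → ℝ) : ℝ :=
  (1 / 2) * sqnorm (fun i => y i - ∑ j, β j * X i j) + lam * ∑ j, |β j|

/-- The quantity `‖y - Xβ‖² + lam ‖β‖₁` whose values at two lasso fits are compared by the
covariance test statistic. In contrast to `lassoObjective` there is no factor `1/2`. -/
def penalizedRSS (X : Matrix (Fin n) ι ℝ) (y : Fin n → ℝ) (lam : ℝ) (β : ι → ℝ) : ℝ :=
  sqnorm (fun i => y i - ∑ j, β j * X i j) + lam * ∑ j, |β j|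

variable {X : Matrix (Fin n) ι ℝ} {y : Fin n → ℝ} {lam : ℝ}

theorem penalizedRSS_columnSubmatrix {S : Finset ι} {β : ι → ℝ} (hβ : ∀ j ∉ S, β j = 0) :
    penalizedRSS (columnSubmatrix X S) y lam (fun j => β j) = penalizedRSS X y lam β := by
  have sum_eq (g : ι → ℝ) (hg : ∀ j ∉ S, g j = 0) : ∑ j : S, g j = ∑ j, g j :=
    (Finset.sum_coe_sort S g).trans
      (Finset.sum_subset S.subset_univ fun j _ hj => hg j hj)
  have h_fit (i : Fin n) : ∑ j : S, β j * X i j = ∑ j, β j * X i j :=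
    sum_eq (fun j => β j * X i j) fun j hj => by simp [hβ j hj]
  have h_norm : ∑ j : S, |β j| = ∑ j, |β j| :=
    sum_eq (fun j => |β j|) fun j hj => by simp [hβ j hj]
  simp only [penalizedRSS, Matrix.submatrix_apply, id, h_fit, h_norm]

variable [DecidableEq ι]

theorem sqnorm_sub_sum_mul_of_transpose_mul_self (hX : X.transpose * X = 1) (y : Fin n → ℝ)
    (β : ι → ℝ) :
    sqnorm (fun i => y i - ∑ j, β j * X i j)
      = sqnorm y + ∑ j, (β j ^ 2 - 2 * (β j * ip y (X.col j))) := by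
  have h_resid : (fun i => y i - ∑ j, β j * X i j) = y - X.mulVec β := by
    ext i
    simp [Matrix.mulVec, dotProduct, mul_comm]
  have h_sqnorm (v : Fin n → ℝ) : sqnorm v = v ⬝ᵥ v := by simp [sqnorm, dotProduct, sq]
  have h_fit : X.mulVec β ⬝ᵥ X.mulVec β = ∑ j, β j ^ 2 := by
    rw [Matrix.dotProduct_mulVec, ← Matrix.mulVec_transpose, Matrix.mulVec_mulVec, hX,
      Matrix.one_mulVec]
    simp [dotProduct, sq]
  have h_cross : y ⬝ᵥ X.mulVec β = ∑ j, β j * ip y (X.col j) := by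
    rw [Matrix.dotProduct_mulVec, dotProduct_comm]
    rfl
  rw [h_resid, h_sqnorm, h_sqnorm, sub_dotProduct, dotProduct_sub, dotProduct_sub,
    dotProduct_comm (X.mulVec β) y, h_fit, h_cross, Finset.sum_sub_distrib, ← Finset.mul_sum]
  ring

theorem lassoObjective_eq_add_sum_scalarLasso (hX : X.transpose * X = 1) (β : ι → ℝ) :
    lassoObjective X y lam β
      = (1 / 2) * sqnorm y + ∑ j, scalarLasso lam (ip y (X.col j)) (β j) := by
  simp only [lassoObjective, scalarLasso, sqnorm_sub_sum_mul_of_transpose_mul_self hX,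
    Finset.sum_add_distrib, Finset.sum_sub_distrib, ← Finset.mul_sum]
  ring

theorem isMinOn_scalarLasso_of_isMinOn_lassoObjective (hX : X.transpose * X = 1) {β : ι → ℝ}
    (hβ : IsMinOn (lassoObjective X y lam) Set.univ β) (j : ι) :
    IsMinOn (scalarLasso lam (ip y (X.col j))) Set.univ (β j) := by
  refine isMinOn_apply_of_isMinOn_sum (f := fun j => scalarLasso lam (ip y (X.col j)))
    (isMinOn_univ_iff.2 fun b => ?_) j
  have h_le := isMinOn_univ_iff.1 hβ b
  simpa only [lassoObjective_eq_add_sum_scalarLasso hX, add_le_add_iff_left] using h_le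

theorem eq_zero_of_isMinOn_lassoObjective (hX : X.transpose * X = 1) {β : ι → ℝ}
    (hβ : IsMinOn (lassoObjective X y lam) Set.univ β) {j : ι} (hj : |ip y (X.col j)| ≤ lam) :
    β j = 0 :=
  eq_of_isMinOn_scalarLasso ((abs_nonneg _).trans hj)
    (isMinOn_scalarLasso_of_isMinOn_lassoObjective hX hβ j) (isMinOn_scalarLasso_zero hj)

theorem eq_restrict_of_isMinOn_lassoObjective (hX : X.transpose * X = 1) (hlam : 0 ≤ lam)
    {S : Finset ι} {βS : S → ℝ} {β : ι → ℝ}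
    (hβS : IsMinOn (lassoObjective (columnSubmatrix X S) y lam) Set.univ βS)
    (hβ : IsMinOn (lassoObjective X y lam) Set.univ β) : βS = fun j : S => β j :=
  funext fun j => eq_of_isMinOn_scalarLasso hlam
    (isMinOn_scalarLasso_of_isMinOn_lassoObjective (columnSubmatrix_transpose_mul_self hX S) hβS j)
    (isMinOn_scalarLasso_of_isMinOn_lassoObjective hX hβ j)

theorem covariance_test_statistic_vanishes_at_knot_general (hX : X.transpose * X = 1)
    {σ : ℝ} (hσ : 0 < σ) (hlam : 0 ≤ lam) {S : Finset ι} (hS : ∀ j ∉ S, |ip y (X.col j)| ≤ lam)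
    {βS : S → ℝ} (hβS : IsMinOn (lassoObjective (columnSubmatrix X S) y lam) Set.univ βS)
    {βhat : ι → ℝ} (hβhat : IsMinOn (lassoObjective X y lam) Set.univ βhat) :
    (penalizedRSS (columnSubmatrix X S) y lam βS - penalizedRSS X y lam βhat) / σ ^ 2 = 0 := by
  have h_support : ∀ j ∉ S, βhat j = 0 := fun j hj =>
    eq_zero_of_isMinOn_lassoObjective hX hβhat (hS j hj)
  rw [div_eq_iff (pow_pos hσ 2).ne', zero_mul, sub_eq_zero,
    eq_restrict_of_isMinOn_lassoObjective hX hlam hβS hβhat,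
    penalizedRSS_columnSubmatrix h_support]

end Lasso

/-- Orthonormal design: the covariance test statistic vanishes at the knot,
`T(Â_{k−1}, λ̂_k) = 0`, where `Â_{k−1}` is the top-`(k−1)` set and `λ̂_k` the `k`-th
largest value of `|z_j|`. -/
theorem covariance_test_statistic_vanishes_at_knot
    {n p : ℕ} (X : Matrix (Fin n) (Fin p) ℝ)
    (horth : X.transpose * X = 1)
    (y : Fin n → ℝ) (σ : ℝ) (hσ : 0 < σ)
    (z : Fin p → ℝ) (hz : z = fun j => ip y (fun i => X i j))
    (hdist : ∀ j k : Fin p, j ≠ k → |z j| ≠ |z k|)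
    (k : ℕ) (hk1 : 1 ≤ k) (hkp : k ≤ p)
    (A B : Finset (Fin p))
    (hAcard : A.card = k - 1) (hBcard : B.card = k)
    (hA : ∀ i ∈ A, ∀ j ∉ A, |z j| < |z i|)
    (hB : ∀ i ∈ B, ∀ j ∉ B, |z j| < |z i|)
    (hBne : B.Nonempty)
    (lamk : ℝ) (hlamk : lamk = B.inf' hBne fun j => |z j|)
    (βA : A → ℝ)
    (hβA : ∀ b : A → ℝ,
      (1 / 2) * sqnorm (fun i => y i - ∑ j : A, βA j * X i j.1) + lamk * ∑ j : A, |βA j|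
        ≤ (1 / 2) * sqnorm (fun i => y i - ∑ j : A, b j * X i j.1) + lamk * ∑ j : A, |b j|)
    (βhat : Fin p → ℝ)
    (hβhat : ∀ β : Fin p → ℝ,
      (1 / 2) * sqnorm (fun i => y i - ∑ j, βhat j * X i j) + lamk * ∑ j, |βhat j|
        ≤ (1 / 2) * sqnorm (fun i => y i - ∑ j, β j * X i j) + lamk * ∑ j, |β j|) :
    ((sqnorm (fun i => y i - ∑ j : A, βA j * X i j.1) + lamk * ∑ j : A, |βA j|)
      - (sqnorm (fun i => y i - ∑ j, βhat j * X i j) + lamk * ∑ j, |βhat j|)) / σ ^ 2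
    = 0 := by
  subst hz hlamk
  have h_outside : ∀ j ∉ A, |ip y (X.col j)| ≤ B.inf' hBne fun j => |ip y (X.col j)| :=
    fun j hj => le_inf'_of_notMem_of_card_le_succ (by omega)
      (fun i hi j hj => (hA i hi j hj).le) (fun i hi j hj => (hB i hi j hj).le) hBne hj
  exact covariance_test_statistic_vanishes_at_knot_general horth hσ
    (Finset.le_inf' hBne _ fun j _ => abs_nonneg _) h_outside
    (isMinOn_univ_iff.2 hβA) (isMinOn_univ_iff.2 hβhat)
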